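/- Let L₁, L₂ : ℝ^n → ℝ be three times continuously differentiable with bounded first, second and third derivatives. Fix θ₀ ∈ ℝ^n and define the two consecutive gradient descent updates θ₁(h) = θ₀ − h ∇L₁(θ₀) and θ₂(h) = θ₁(h) − h ∇L₂(θ₁(h)). For each h > 0 let θ̃_h solve the modified equation θ̇(t) = −∇L̃_{1,2}(θ(t)) + (h/2) [∇L₁, ∇L₂](θ(t)) with θ̃_h(0) = θ₀, where L̃_{1,2}(θ) = L₁(θ) + L₂(θ) + (h/4)‖∇L₁(θ)‖² + (h/4)‖∇L₂(θ)‖². Then there exist constants C > 0 and h₀ > 0 such that for all h ∈ (0, h₀), ‖θ̃_h(h) − θ₂(h)‖ ≤ C h³. -/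

import Mathlib

open Set

/-- The Lie bracket of two vector fields `F, G : ℝⁿ → ℝⁿ`:
`[F, G](θ) = DG(θ) F(θ) - DF(θ) G(θ)`. -/
noncomputable def lieBracket {n : ℕ}
    (F G : EuclideanSpace ℝ (Fin n) → EuclideanSpace ℝ (Fin n))
    (θ : EuclideanSpace ℝ (Fin n)) : EuclideanSpace ℝ (Fin n) :=
  fderiv ℝ G θ (F θ) - fderiv ℝ F θ (G θ)

/-!
Two consecutive Euler steps along vector fields `F` and then `G` give
`x₀ + h (F + G) + h² DG F + O(h³)`, while the solution of `ẋ = (F + G)(x) + h c(x)` at time `h` is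
`x₀ + h (F + G) + h² (½ D(F + G)(F + G) + c) + O(h³)`. The two agree up to `O(h³)` exactly when
`c = ½ ([F, G] - DF F - DG G)` at `x₀`. For `F = -∇L₁` and `G = -∇L₂` the symmetry of the Hessian
turns `½ DF F` into `¼ ∇‖∇L₁‖²`, the implicit gradient penalty of the modified loss.
-/

section

open Filter Asymptotics Topology Gradient

/-- The filter of pairs `(h, t)` with `h → 0⁺` and `0 ≤ t ≤ h`. Estimates along it are estimates
over one step of size `h`, uniform in the time `t` within the step. -/
def shortTime : Filter (ℝ × ℝ) :=
  comap Prod.fst (𝓝[>] 0) ⊓ 𝓟 {p | p.2 ∈ Icc 0 p.1}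

theorem eventually_shortTime_iff {P : ℝ × ℝ → Prop} :
    (∀ᶠ p in shortTime, P p) ↔ ∀ᶠ h in 𝓝[>] (0 : ℝ), ∀ t ∈ Icc 0 h, P (h, t) := by
  rw [shortTime, eventually_inf_principal, eventually_comap]
  exact eventually_congr (.of_forall fun h ↦
    ⟨fun H t ht ↦ H (h, t) rfl ht, fun H p hp ht ↦ by subst hp; exact H p.2 ht⟩)

theorem tendsto_fst_shortTime : Tendsto Prod.fst shortTime (𝓝[>] (0 : ℝ)) :=
  tendsto_comap.mono_left inf_le_left

theorem tendsto_diag_shortTime : Tendsto (fun h : ℝ ↦ (h, h)) (𝓝[>] 0) shortTime := by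
  refine tendsto_iff_eventually.2 fun P hP ↦ ?_
  filter_upwards [eventually_shortTime_iff.1 hP, self_mem_nhdsWithin] with h hh (hpos : 0 < h)
  exact hh h (right_mem_Icc.2 hpos.le)

section NormedSpace

variable {E E' : Type*} [NormedAddCommGroup E] [NormedSpace ℝ E]
  [NormedAddCommGroup E'] [NormedSpace ℝ E']

theorem isBigO_sub_sub_fderiv_of_contDiffAt {f : E → E'} {x₀ : E} (hf : ContDiffAt ℝ 2 f x₀) :
    (fun y ↦ f y - f x₀ - fderiv ℝ f x₀ (y - x₀)) =O[𝓝 x₀] fun y ↦ ‖y - x₀‖ ^ 2 := by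
  have hf' : DifferentiableAt ℝ (fderiv ℝ f) x₀ :=
    (hf.fderiv_right (m := 1) le_rfl).differentiableAt one_ne_zero
  obtain ⟨C, hC, hfC⟩ := hf'.isBigO_sub.exists_pos
  have hd : ∀ᶠ y in 𝓝 x₀, DifferentiableAt ℝ f y :=
    (hf.eventually (by simp)).mono fun y hy ↦ hy.differentiableAt two_ne_zero
  obtain ⟨r, hr, hball⟩ := Metric.eventually_nhds_iff_ball.1 (hd.and hfC.bound)
  refine IsBigO.of_bound C ?_
  filter_upwards [Metric.ball_mem_nhds x₀ hr] with y hy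
  have hseg : segment ℝ x₀ y ⊆ Metric.ball x₀ r :=
    (convex_ball x₀ r).segment_subset (Metric.mem_ball_self hr) hy
  have hmv := (convex_segment x₀ y).norm_image_sub_le_of_norm_fderiv_le' (C := C * ‖y - x₀‖)
    (fun z hz ↦ (hball z (hseg hz)).1)
    (fun z hz ↦ (hball z (hseg hz)).2.trans <|
      mul_le_mul_of_nonneg_left (norm_sub_le_of_mem_segment hz) hC.le)
    (left_mem_segment ℝ x₀ y) (right_mem_segment ℝ x₀ y)
  simpa [pow_two, mul_assoc] using hmv

theorem isBigO_shortTime_pow_succ_of_hasDerivWithinAt {u u' : ℝ → ℝ → E} {k : ℕ}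
    (hu₀ : ∀ᶠ h in 𝓝[>] 0, u h 0 = 0)
    (hu : ∀ᶠ p in shortTime, HasDerivWithinAt (u p.1) (u' p.1 p.2) (Icc 0 p.1) p.2)
    (hu' : (fun p ↦ u' p.1 p.2) =O[shortTime] fun p ↦ p.1 ^ k) :
    (fun p ↦ u p.1 p.2) =O[shortTime] fun p ↦ p.1 ^ (k + 1) := by
  obtain ⟨C, hC, hbound⟩ := hu'.exists_pos
  refine IsBigO.of_bound C (eventually_shortTime_iff.2 ?_)
  filter_upwards [hu₀, eventually_shortTime_iff.1 hu, eventually_shortTime_iff.1 hbound.bound,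
    self_mem_nhdsWithin] with h h₀ hder hle (hpos : 0 < h) t ht
  calc ‖u h t‖ = ‖u h t - u h 0‖ := by rw [h₀, sub_zero]
    _ ≤ C * ‖h ^ k‖ * (t - 0) := norm_image_sub_le_of_norm_deriv_le_segment' hder
        (fun s hs ↦ hle s (Ico_subset_Icc_self hs)) t ht
    _ ≤ C * ‖h ^ k‖ * ‖h‖ := by
        rw [sub_zero, Real.norm_of_nonneg hpos.le]
        gcongr
        exact ht.2
    _ = C * ‖h ^ (k + 1)‖ := by rw [pow_succ, norm_mul, mul_assoc]

/-- For every small `h > 0`, the curve `x h` solves the autonomous equation `ẋ = v h x` with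
`x h 0 = x₀` over one step of size `h`. -/
structure IsShortTimeSolution (v : ℝ → E → E) (x₀ : E) (x : ℝ → ℝ → E) : Prop where
  apply_zero : ∀ᶠ h in 𝓝[>] 0, x h 0 = x₀
  isIntegralCurveOn : ∀ᶠ h in 𝓝[>] 0, IsIntegralCurveOn (x h) (fun _ ↦ v h) (Icc 0 h)

namespace IsShortTimeSolution

variable {v : ℝ → E → E} {x₀ : E} {x : ℝ → ℝ → E}

theorem eventually_hasDerivWithinAt (hx : IsShortTimeSolution v x₀ x) :
    ∀ᶠ p in shortTime, HasDerivWithinAt (x p.1) (v p.1 (x p.1 p.2)) (Icc 0 p.1) p.2 :=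
  eventually_shortTime_iff.2 hx.isIntegralCurveOn

/- The velocity is only controlled near `x₀`, so the bound `‖x h t - x₀‖ ≤ (M + 1) t` is proved by
the fencing argument: wherever it is attained, the curve is still in the region of control. -/
theorem isBigO_sub_init (hx : IsShortTimeSolution v x₀ x)
    (hv : (fun p : ℝ × E ↦ v p.1 p.2) =O[𝓝[>] 0 ×ˢ 𝓝 x₀] fun _ ↦ (1 : ℝ)) :
    (fun p ↦ x p.1 p.2 - x₀) =O[shortTime] Prod.fst := by
  obtain ⟨M, hM, hvM⟩ := hv.exists_pos
  obtain ⟨P, hP, Q, hQ, hPQ⟩ := eventually_prod_iff.1 hvM.bound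
  obtain ⟨r, hr, hball⟩ := Metric.eventually_nhds_iff_ball.1 hQ
  have hsmall : ∀ᶠ h in 𝓝[>] (0 : ℝ), h < r / (M + 1) :=
    eventually_nhdsWithin_of_eventually_nhds (eventually_lt_nhds (by positivity))
  refine IsBigO.of_bound (M + 1) (eventually_shortTime_iff.2 ?_)
  filter_upwards [hx.apply_zero, hx.isIntegralCurveOn, hP, hsmall] with h h₀ hcurve hPh hlt t ht
  have hder : ∀ s ∈ Icc 0 h, HasDerivWithinAt (fun s ↦ x h s - x₀) (v h (x h s)) (Icc 0 h) s :=
    fun s hs ↦ (hcurve s hs).sub_const x₀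
  have hfence : ‖x h t - x₀‖ ≤ (M + 1) * t := by
    refine image_norm_le_of_norm_deriv_right_lt_deriv_boundary
      (B := fun s ↦ (M + 1) * s) (B' := fun _ ↦ M + 1)
      (fun s hs ↦ (hder s hs).continuousWithinAt)
      (fun s hs ↦ (hder s (Ico_subset_Icc_self hs)).mono_of_mem_nhdsWithin
        (Icc_mem_nhdsGE_of_mem hs))
      (by simp [h₀]) (fun s ↦ by simpa using (hasDerivAt_id s).const_mul (M + 1))
      (fun s hs hnorm ↦ ?_) ht
    have hmem : x h s ∈ Metric.ball x₀ r := by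
      rw [mem_ball_iff_norm, hnorm, mul_comm, ← lt_div_iff₀ (by positivity)]
      exact hs.2.trans hlt
    have hle : ‖v h (x h s)‖ ≤ M := by simpa using hPQ hPh (hball _ hmem)
    exact hle.trans_lt (lt_add_one M)
  refine hfence.trans ?_
  gcongr
  exact ht.2.trans (le_abs_self h)

variable {f c : E → E}

theorem isBigO_sub_init_of_eventuallyEq (hx : IsShortTimeSolution v x₀ x)
    (hv : ∀ᶠ y in 𝓝 x₀, ∀ h, v h y = f y + h • c y)
    (hf : ContinuousAt f x₀) (hc : ContinuousAt c x₀) :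
    (fun p ↦ x p.1 p.2 - x₀) =O[shortTime] Prod.fst := by
  have hcont : ContinuousAt (fun p : ℝ × E ↦ f p.2 + p.1 • c p.2) (0, x₀) :=
    (hf.comp continuousAt_snd).add (continuousAt_fst.smul (hc.comp continuousAt_snd))
  have hle : 𝓝[>] (0 : ℝ) ×ˢ 𝓝 x₀ ≤ 𝓝 (0, x₀) := by
    rw [nhds_prod_eq]
    exact prod_mono nhdsWithin_le_nhds le_rfl
  refine hx.isBigO_sub_init (((hcont.tendsto.mono_left hle).isBigO_one ℝ).congr' ?_ .rfl)
  exact (hv.prod_inr _).mono fun p hp ↦ (hp p.1).symm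

theorem tendsto_of_eventuallyEq (hx : IsShortTimeSolution v x₀ x)
    (hv : ∀ᶠ y in 𝓝 x₀, ∀ h, v h y = f y + h • c y)
    (hf : ContinuousAt f x₀) (hc : ContinuousAt c x₀) :
    Tendsto (fun p ↦ x p.1 p.2) shortTime (𝓝 x₀) :=
  tendsto_sub_nhds_zero_iff.1 <| (hx.isBigO_sub_init_of_eventuallyEq hv hf hc).trans_tendsto
    (tendsto_fst_shortTime.mono_right nhdsWithin_le_nhds)

theorem isBigO_sub_firstOrder (hx : IsShortTimeSolution v x₀ x)
    (hv : ∀ᶠ y in 𝓝 x₀, ∀ h, v h y = f y + h • c y)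
    (hf : DifferentiableAt ℝ f x₀) (hc : ContinuousAt c x₀) :
    (fun p ↦ x p.1 p.2 - x₀ - p.2 • f x₀) =O[shortTime] fun p ↦ p.1 ^ 2 := by
  have hlim := hx.tendsto_of_eventuallyEq hv hf.continuousAt hc
  have hf₁ : (fun p ↦ f (x p.1 p.2) - f x₀) =O[shortTime] fun p ↦ p.1 ^ 1 := by
    simp only [pow_one]
    exact (hf.isBigO_sub.comp_tendsto hlim).trans
      (hx.isBigO_sub_init_of_eventuallyEq hv hf.continuousAt hc)
  have hc₁ : (fun p ↦ p.1 • c (x p.1 p.2)) =O[shortTime] fun p ↦ p.1 ^ 1 := by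
    simpa using (isBigO_refl Prod.fst shortTime).smul ((hc.tendsto.comp hlim).isBigO_one ℝ)
  refine isBigO_shortTime_pow_succ_of_hasDerivWithinAt (u := fun h t ↦ x h t - x₀ - t • f x₀)
    (u' := fun h t ↦ (f (x h t) - f x₀) + h • c (x h t))
    (hx.apply_zero.mono fun h h₀ ↦ by simp [h₀]) ?_ (hf₁.add hc₁)
  filter_upwards [hx.eventually_hasDerivWithinAt, hlim.eventually hv] with p hder hvp
  refine ((hder.sub_const x₀).sub ((hasDerivWithinAt_id p.2 _).smul_const (f x₀))).congr_deriv ?_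
  rw [hvp]
  module

theorem isBigO_sub_secondOrder (hx : IsShortTimeSolution v x₀ x)
    (hv : ∀ᶠ y in 𝓝 x₀, ∀ h, v h y = f y + h • c y)
    (hf : ContDiffAt ℝ 2 f x₀) (hc : DifferentiableAt ℝ c x₀) :
    (fun p ↦ x p.1 p.2 - x₀ - p.2 • f x₀ - (p.2 ^ 2 / 2) • fderiv ℝ f x₀ (f x₀)
      - (p.2 * p.1) • c x₀) =O[shortTime] fun p ↦ p.1 ^ 3 := by
  have hfd : DifferentiableAt ℝ f x₀ := hf.differentiableAt two_ne_zero
  have hlim := hx.tendsto_of_eventuallyEq hv hf.continuousAt hc.continuousAt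
  have hx₁ := hx.isBigO_sub_init_of_eventuallyEq hv hf.continuousAt hc.continuousAt
  have hf₂ : (fun p ↦ f (x p.1 p.2) - f x₀ - fderiv ℝ f x₀ (x p.1 p.2 - x₀))
      =O[shortTime] fun p ↦ p.1 ^ 2 :=
    ((isBigO_sub_sub_fderiv_of_contDiffAt hf).comp_tendsto hlim).trans (hx₁.norm_left.pow 2)
  have hDf₂ : (fun p ↦ fderiv ℝ f x₀ (x p.1 p.2 - x₀ - p.2 • f x₀))
      =O[shortTime] fun p ↦ p.1 ^ 2 :=
    ((fderiv ℝ f x₀).isBigO_comp _ _).trans (hx.isBigO_sub_firstOrder hv hfd hc.continuousAt)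
  have hc₂ : (fun p ↦ p.1 • (c (x p.1 p.2) - c x₀)) =O[shortTime] fun p ↦ p.1 ^ 2 := by
    simp only [pow_two]
    exact (isBigO_refl Prod.fst shortTime).smul
      ((hc.isBigO_sub.comp_tendsto hlim).trans hx₁)
  refine isBigO_shortTime_pow_succ_of_hasDerivWithinAt
    (u := fun h t ↦ x h t - x₀ - t • f x₀ - (t ^ 2 / 2) • fderiv ℝ f x₀ (f x₀) - (t * h) • c x₀)
    (u' := fun h t ↦ (f (x h t) - f x₀ - fderiv ℝ f x₀ (x h t - x₀))
      + fderiv ℝ f x₀ (x h t - x₀ - t • f x₀) + h • (c (x h t) - c x₀))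
    (hx.apply_zero.mono fun h h₀ ↦ by simp [h₀]) ?_ ((hf₂.add hDf₂).add hc₂)
  filter_upwards [hx.eventually_hasDerivWithinAt, hlim.eventually hv] with p hder hvp
  have hid := hasDerivWithinAt_id p.2 (Icc 0 p.1)
  refine ((((hder.sub_const x₀).sub (hid.smul_const (f x₀))).sub
    (((hid.pow 2).div_const 2).smul_const (fderiv ℝ f x₀ (f x₀)))).sub
    ((hid.mul_const p.1).smul_const (c x₀))).congr_deriv ?_
  simp only [hvp, map_sub, map_smul, id, Nat.cast_ofNat, Nat.add_one_sub_one]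
  module

theorem isBigO_sub_endpoint (hx : IsShortTimeSolution v x₀ x)
    (hv : ∀ᶠ y in 𝓝 x₀, ∀ h, v h y = f y + h • c y)
    (hf : ContDiffAt ℝ 2 f x₀) (hc : DifferentiableAt ℝ c x₀) :
    (fun h ↦ x h h - (x₀ + h • f x₀ + h ^ 2 • ((1 / 2 : ℝ) • fderiv ℝ f x₀ (f x₀) + c x₀)))
      =O[𝓝[>] 0] fun h ↦ h ^ 3 := by
  refine ((hx.isBigO_sub_secondOrder hv hf hc).comp_tendsto tendsto_diag_shortTime).congr_left
    fun h ↦ ?_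
  simp only [Function.comp_apply]
  module

end IsShortTimeSolution

/-- One explicit Euler step of size `h` along the vector field `F`; for `F = -∇L` it is a gradient
descent step on `L` with learning rate `h`. -/
def eulerStep (F : E → E) (h : ℝ) (x : E) : E :=
  x + h • F x

theorem isBigO_eulerStep_eulerStep_sub {F G : E → E} {x₀ : E} (hG : ContDiffAt ℝ 2 G x₀) :
    (fun h ↦ eulerStep G h (eulerStep F h x₀)
      - (x₀ + h • (F x₀ + G x₀) + h ^ 2 • fderiv ℝ G x₀ (F x₀)))
      =O[𝓝[>] 0] fun h ↦ h ^ 3 := by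
  have hstep : Tendsto (fun h ↦ eulerStep F h x₀) (𝓝[>] 0) (𝓝 x₀) := by
    have hcont : Continuous fun h ↦ eulerStep F h x₀ := by unfold eulerStep; fun_prop
    exact (hcont.tendsto' 0 x₀ (by simp [eulerStep])).mono_left nhdsWithin_le_nhds
  have hincr : (fun h ↦ eulerStep F h x₀ - x₀) =O[𝓝[>] 0] fun h ↦ h := by
    simpa [eulerStep] using
      (isBigO_refl (fun h : ℝ ↦ h) (𝓝[>] 0)).smul (isBigO_const_const (F x₀) (one_ne_zero' ℝ) _)
  have htaylor := ((isBigO_sub_sub_fderiv_of_contDiffAt hG).comp_tendsto hstep).trans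
    (hincr.norm_left.pow 2)
  refine ((isBigO_refl (fun h : ℝ ↦ h) (𝓝[>] 0)).smul htaylor).congr (fun h ↦ ?_) fun h ↦ ?_
  · simp only [Function.comp_apply, eulerStep, add_sub_cancel_left, map_smul]
    module
  · rw [smul_eq_mul, ← pow_succ']

/-- The `O(h)` coefficient of the modified equation of the composition of Euler steps along `F` and
then `G`: the field whose flow shadows this composition up to `O(h³)` is
`F + G + h • eulerCorrection F G`. -/
noncomputable def eulerCorrection (F G : E → E) (x : E) : E :=
  (1 / 2 : ℝ) • (VectorField.lieBracket ℝ F G x - fderiv ℝ F x (F x) - fderiv ℝ G x (G x))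

theorem differentiableAt_eulerCorrection {F G : E → E} {x : E}
    (hF : ContDiffAt ℝ 2 F x) (hG : ContDiffAt ℝ 2 G x) :
    DifferentiableAt ℝ (eulerCorrection F G) x := by
  have hself : ∀ {H : E → E}, ContDiffAt ℝ 2 H x →
      DifferentiableAt ℝ (fun y ↦ fderiv ℝ H y (H y)) x := fun hH ↦
    ((hH.fderiv_right (m := 1) le_rfl).differentiableAt one_ne_zero).clm_apply
      (hH.differentiableAt two_ne_zero)
  have hbracket : DifferentiableAt ℝ (VectorField.lieBracket ℝ F G) x :=
    (hF.lieBracket_vectorField hG (m := 1) le_rfl).differentiableAt one_ne_zero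
  exact ((hbracket.sub (hself hF)).sub (hself hG)).const_smul _

theorem half_fderiv_add_eulerCorrection {F G : E → E} {x : E}
    (hF : DifferentiableAt ℝ F x) (hG : DifferentiableAt ℝ G x) :
    (1 / 2 : ℝ) • fderiv ℝ (F + G) x ((F + G) x) + eulerCorrection F G x
      = fderiv ℝ G x (F x) := by
  simp only [fderiv_add hF hG, Pi.add_apply, add_apply, map_add,
    eulerCorrection, VectorField.lieBracket]
  module

theorem IsShortTimeSolution.isBigO_sub_eulerStep_eulerStep {F G : E → E} {v : ℝ → E → E} {x₀ : E}
    {x : ℝ → ℝ → E} (hF : ContDiffAt ℝ 2 F x₀) (hG : ContDiffAt ℝ 2 G x₀)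
    (hv : ∀ᶠ y in 𝓝 x₀, ∀ h, v h y = (F + G) y + h • eulerCorrection F G y)
    (hx : IsShortTimeSolution v x₀ x) :
    (fun h ↦ x h h - eulerStep G h (eulerStep F h x₀)) =O[𝓝[>] 0] fun h ↦ h ^ 3 := by
  have hsol := hx.isBigO_sub_endpoint hv (hF.add hG) (differentiableAt_eulerCorrection hF hG)
  rw [half_fderiv_add_eulerCorrection (hF.differentiableAt two_ne_zero)
    (hG.differentiableAt two_ne_zero)] at hsol
  exact (hsol.sub (isBigO_eulerStep_eulerStep_sub hG)).congr_left fun h ↦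
    sub_sub_sub_cancel_right ..

end NormedSpace

section InnerProductSpace

variable {E : Type*} [NormedAddCommGroup E] [InnerProductSpace ℝ E] [CompleteSpace E]

theorem contDiffAt_gradient {L : E → ℝ} {x : E} {m n : WithTop ℕ∞} (hL : ContDiffAt ℝ n L x)
    (hmn : m + 1 ≤ n) : ContDiffAt ℝ m (∇ L) x :=
  (InnerProductSpace.toDual ℝ E).symm.contDiff.contDiffAt.comp x (hL.fderiv_right hmn)

theorem inner_fderiv_gradient_comm {L : E → ℝ} {x : E} (hL : ContDiffAt ℝ 2 L x) (u w : E) :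
    inner ℝ (fderiv ℝ (∇ L) x u) w = inner ℝ (fderiv ℝ (∇ L) x w) u := by
  have hhess : ∀ u w : E, inner ℝ (fderiv ℝ (∇ L) x u) w = fderiv ℝ (fderiv ℝ L) x u w := by
    intro u w
    change inner ℝ (fderiv ℝ ((InnerProductSpace.toDual ℝ E).symm ∘ fderiv ℝ L) x u) w = _
    rw [LinearIsometryEquiv.comp_fderiv]
    exact InnerProductSpace.toDual_symm_apply
  rw [hhess, hhess]
  exact hL.isSymmSndFDerivAt (by simp) u w

theorem hasGradientAt_norm_gradient_sq {L : E → ℝ} {x : E} (hL : ContDiffAt ℝ 2 L x) :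
    HasGradientAt (fun y ↦ ‖∇ L y‖ ^ 2) ((2 : ℝ) • fderiv ℝ (∇ L) x (∇ L x)) x := by
  have hgrad : HasFDerivAt (∇ L) (fderiv ℝ (∇ L) x) x :=
    ((contDiffAt_gradient hL (m := 1) le_rfl).differentiableAt one_ne_zero).hasFDerivAt
  refine hasGradientAt_iff_hasFDerivAt.2 (hgrad.norm_sq.congr_fderiv ?_)
  ext w
  simp [inner_fderiv_gradient_comm hL (∇ L x) w]

/-- The modified loss `L̃₁₂ = L₁ + L₂ + (h/4)‖∇L₁‖² + (h/4)‖∇L₂‖²` of two consecutive gradient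
descent steps of learning rate `h`. -/
noncomputable def modifiedLoss (L₁ L₂ : E → ℝ) (h : ℝ) (θ : E) : ℝ :=
  L₁ θ + L₂ θ + (h / 4) * ‖∇ L₁ θ‖ ^ 2 + (h / 4) * ‖∇ L₂ θ‖ ^ 2

theorem gradient_modifiedLoss {L₁ L₂ : E → ℝ} {θ : E} (hL₁ : ContDiffAt ℝ 2 L₁ θ)
    (hL₂ : ContDiffAt ℝ 2 L₂ θ) (h : ℝ) :
    ∇ (modifiedLoss L₁ L₂ h) θ = ∇ L₁ θ + ∇ L₂ θ
      + (h / 2) • (fderiv ℝ (∇ L₁) θ (∇ L₁ θ) + fderiv ℝ (∇ L₂) θ (∇ L₂ θ)) := by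
  have hgrad₁ := (hL₁.differentiableAt two_ne_zero).hasGradientAt.hasFDerivAt
  have hgrad₂ := (hL₂.differentiableAt two_ne_zero).hasGradientAt.hasFDerivAt
  have hsq₁ := (hasGradientAt_norm_gradient_sq hL₁).hasFDerivAt.const_mul (h / 4)
  have hsq₂ := (hasGradientAt_norm_gradient_sq hL₂).hasFDerivAt.const_mul (h / 4)
  refine (hasGradientAt_iff_hasFDerivAt.2
    ((((hgrad₁.add hgrad₂).add hsq₁).add hsq₂).congr_fderiv ?_)).gradient
  simp only [map_add, map_smul]
  module

theorem neg_gradient_modifiedLoss_add_lieBracket {L₁ L₂ : E → ℝ} {θ : E}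
    (hL₁ : ContDiffAt ℝ 2 L₁ θ) (hL₂ : ContDiffAt ℝ 2 L₂ θ) (h : ℝ) :
    -∇ (modifiedLoss L₁ L₂ h) θ + (h / 2) • VectorField.lieBracket ℝ (∇ L₁) (∇ L₂) θ
      = (-∇ L₁ + -∇ L₂) θ + h • eulerCorrection (-∇ L₁) (-∇ L₂) θ := by
  simp only [gradient_modifiedLoss hL₁ hL₂, eulerCorrection, VectorField.lieBracket, fderiv_neg,
    Pi.add_apply, Pi.neg_apply, neg_apply, map_neg]
  module

theorem continual_learning_modified_equation_general {L₁ L₂ : E → ℝ} {θ₀ : E}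
    (hL₁ : ContDiffAt ℝ 3 L₁ θ₀) (hL₂ : ContDiffAt ℝ 3 L₂ θ₀) {θ : ℝ → ℝ → E}
    (hθ : IsShortTimeSolution (fun h y ↦ -∇ (modifiedLoss L₁ L₂ h) y
      + (h / 2) • VectorField.lieBracket ℝ (∇ L₁) (∇ L₂) y) θ₀ θ) :
    (fun h ↦ θ h h - eulerStep (-∇ L₂) h (eulerStep (-∇ L₁) h θ₀)) =O[𝓝[>] 0] fun h ↦ h ^ 3 := by
  have hmod : (2 : WithTop ℕ∞) + 1 ≤ 3 := by norm_num
  have hC2 : ∀ {L : E → ℝ}, ContDiffAt ℝ 3 L θ₀ → ∀ᶠ y in 𝓝 θ₀, ContDiffAt ℝ 2 L y := fun hL ↦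
    (hL.of_le (by norm_num)).eventually (by simp)
  refine hθ.isBigO_sub_eulerStep_eulerStep (contDiffAt_gradient hL₁ hmod).neg
    (contDiffAt_gradient hL₂ hmod).neg ?_
  filter_upwards [hC2 hL₁, hC2 hL₂] with y hy₁ hy₂ h
  exact neg_gradient_modifiedLoss_add_lieBracket hy₁ hy₂ h

end InnerProductSpace

theorem exists_forall_Ioo_norm_le_of_isBigO {E : Type*} [SeminormedAddCommGroup E] {f : ℝ → E}
    {k : ℕ} (hf : f =O[𝓝[>] 0] fun h ↦ h ^ k) :
    ∃ C > (0 : ℝ), ∃ h₀ > (0 : ℝ), ∀ h ∈ Ioo (0 : ℝ) h₀, ‖f h‖ ≤ C * h ^ k := by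
  obtain ⟨C, hC, hbound⟩ := hf.exists_pos
  obtain ⟨h₀, hh₀, hsub⟩ := mem_nhdsGT_iff_exists_Ioo_subset.1 hbound.bound
  refine ⟨C, hC, h₀, hh₀, fun h hh ↦ (hsub hh).trans_eq ?_⟩
  rw [Real.norm_of_nonneg (pow_nonneg hh.1.le k)]

end

/-- **Continual-learning modified equation theorem.**
Let `L₁, L₂ : ℝⁿ → ℝ` be C³ with bounded first, second and third derivatives, and let
`θ₂(h)` be the result of a gradient descent step on `L₁` followed by one on `L₂`,
both of learning rate `h`, starting at `θ₀`. If for each `h > 0` the curve `θt h` solves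
`θ̇ = -∇L̃₁₂(θ) + (h/2)[∇L₁, ∇L₂](θ)` with `θt h 0 = θ₀`, where
`L̃₁₂ = L₁ + L₂ + (h/4)‖∇L₁‖² + (h/4)‖∇L₂‖²`, then the discretization drift
`‖θt h h - θ₂(h)‖` is of order `O(h³)`. -/
theorem continual_learning_modified_equation {n : ℕ}
    (L₁ L₂ : EuclideanSpace ℝ (Fin n) → ℝ)
    (hL₁ : ContDiff ℝ 3 L₁) (hL₂ : ContDiff ℝ 3 L₂)
    (K : ℝ)
    (hb₁ : ∀ i : ℕ, 1 ≤ i → i ≤ 3 → ∀ x, ‖iteratedFDeriv ℝ i L₁ x‖ ≤ K)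
    (hb₂ : ∀ i : ℕ, 1 ≤ i → i ≤ 3 → ∀ x, ‖iteratedFDeriv ℝ i L₂ x‖ ≤ K)
    (θ₀ : EuclideanSpace ℝ (Fin n))
    (θ₁ θ₂ : ℝ → EuclideanSpace ℝ (Fin n))
    (hθ₁ : ∀ h : ℝ, θ₁ h = θ₀ - h • gradient L₁ θ₀)
    (hθ₂ : ∀ h : ℝ, θ₂ h = θ₁ h - h • gradient L₂ (θ₁ h))
    (Lmod : ℝ → EuclideanSpace ℝ (Fin n) → ℝ)
    (hLmod : ∀ h : ℝ, ∀ θ : EuclideanSpace ℝ (Fin n),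
      Lmod h θ = L₁ θ + L₂ θ + (h / 4) * ‖gradient L₁ θ‖ ^ 2
        + (h / 4) * ‖gradient L₂ θ‖ ^ 2)
    (θt : ℝ → ℝ → EuclideanSpace ℝ (Fin n))
    (hinit : ∀ h : ℝ, 0 < h → θt h 0 = θ₀)
    (hode : ∀ h : ℝ, 0 < h → ∀ t ∈ Icc (0 : ℝ) h,
      HasDerivAt (θt h)
        (-(gradient (Lmod h) (θt h t))
          + (h / 2) • lieBracket
              (fun x => gradient L₁ x) (fun x => gradient L₂ x) (θt h t)) t) :
    ∃ C > (0 : ℝ), ∃ h₀ > (0 : ℝ), ∀ h ∈ Ioo (0 : ℝ) h₀,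
      ‖θt h h - θ₂ h‖ ≤ C * h ^ 3 := by
  obtain rfl : Lmod = modifiedLoss L₁ L₂ := funext₂ hLmod
  obtain rfl : θ₁ = fun h ↦ eulerStep (-gradient L₁) h θ₀ :=
    funext fun h ↦ by simp [hθ₁, eulerStep, sub_eq_add_neg]
  obtain rfl : θ₂ = fun h ↦ eulerStep (-gradient L₂) h (eulerStep (-gradient L₁) h θ₀) :=
    funext fun h ↦ by simp [hθ₂, eulerStep, sub_eq_add_neg]
  exact exists_forall_Ioo_norm_le_of_isBigO <|
    continual_learning_modified_equation_general hL₁.contDiffAt hL₂.contDiffAt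
      { apply_zero := eventually_nhdsWithin_of_forall hinit
        isIntegralCurveOn := eventually_nhdsWithin_of_forall fun h hh t ht ↦
          (hode h hh t ht).hasDerivWithinAt }
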